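/- There is an absolute constant C > 0 with the following property. Let t > 0, x ∈ ℝ², A > 0, and let F(s,y) (defined for 0 ≤ s < t, |y−x| ≤ t−s), G(s,y) and H(s,y) be nonnegative measurable functions such that, writing ξ = (y−x)/(t−s), one has F(s,y) ≤ A G(s,y)^{2/5} (1 − |ξ|²)^{−2/5} and F(s,y) ≤ A H(s,y)^{2/5} on the region {|y−x| ≤ t−s}. Then for every ε ∈ (0,1]: ∫₀ᵗ ∫_{|y−x| ≤ t−s} F(s,y) / ((t−s)√((t−s)² − |y−x|²)) dy ds ≤ C A (1+t) [ ε^{−1/10} ( ∫₀ᵗ ∫_{|y−x| ≤ t−s} G(s,y)/√((t−s)² − |y−x|²) dy ds )^{2/5} + ε^{3/10} ( ∫₀ᵗ ∫_{|y−x| ≤ t−s} H(s,y)/√((t−s)² − |y−x|²) dy ds )^{2/5} ]. -/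

import Mathlib

open MeasureTheory Set
open scoped NNReal

/-!
Split the backward cone along the surface `1 - |ξ|² = ε`, using the bound by `G` where
`1 - |ξ|² ≥ ε` and the bound by `H` near the lateral boundary. On each part a single application of
Hölder's inequality in spacetime separates the integral of `G` (or `H`) from that of a weight which
is a power of `t - s` times a power of `v = 1 - |ξ|²`. In polar coordinates with `v` as the radial
variable the weight integral factors into one-dimensional power integrals, and the cut-off at
`v = ε` keeps the one over `v` finite and produces the power of `ε`.
-/

open Metric Module
open scoped ENNReal

section PowerIntegrals

lemma lintegral_Ioo_rpow {a δ : ℝ} (ha : -1 < a) (hδ : 0 ≤ δ) :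
    ∫⁻ v in Ioo 0 δ, ENNReal.ofReal (v ^ a) = ENNReal.ofReal (δ ^ (a + 1) / (a + 1)) := by
  have hint : IntegrableOn (fun v : ℝ => v ^ a) (Ioc 0 δ) :=
    (intervalIntegral.intervalIntegrable_rpow' ha).1
  have hnonneg : 0 ≤ᵐ[volume.restrict (Ioc 0 δ)] fun v : ℝ => v ^ a :=
    (ae_restrict_mem measurableSet_Ioc).mono fun v hv => Real.rpow_nonneg hv.1.le a
  rw [restrict_Ioo_eq_restrict_Ioc, ← ofReal_integral_eq_lintegral_ofReal hint hnonneg,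
    ← intervalIntegral.integral_of_le hδ, integral_rpow (Or.inl ha),
    Real.zero_rpow (by linarith), sub_zero]

lemma lintegral_Ioi_rpow {a δ : ℝ} (ha : a < -1) (hδ : 0 < δ) :
    ∫⁻ v in Ioi δ, ENNReal.ofReal (v ^ a) = ENNReal.ofReal (-δ ^ (a + 1) / (a + 1)) := by
  have hnonneg : 0 ≤ᵐ[volume.restrict (Ioi δ)] fun v : ℝ => v ^ a :=
    (ae_restrict_mem measurableSet_Ioi).mono fun v hv => Real.rpow_nonneg (hδ.trans hv).le a
  rw [← integral_Ioi_rpow_of_lt ha hδ,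
    ofReal_integral_eq_lintegral_ofReal (integrableOn_Ioi_rpow_of_lt ha hδ) hnonneg]

lemma lintegral_Ioo_sub_rpow {a t : ℝ} (ha : -1 < a) (ht : 0 ≤ t) :
    ∫⁻ s in Ioo 0 t, ENNReal.ofReal ((t - s) ^ a) = ENNReal.ofReal (t ^ (a + 1) / (a + 1)) := by
  have hreflect : (t - ·) ⁻¹' Ioo 0 t = Ioo 0 t := by simp
  have hmp := (volume.measurePreserving_sub_left t).setLIntegral_comp_preimage
    (measurableSet_Ioo (a := 0) (b := t)) (f := fun v => ENNReal.ofReal (v ^ a)) (by fun_prop)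
  rw [hreflect] at hmp
  rw [hmp, lintegral_Ioo_rpow ha ht]

lemma lintegral_indicator_Iio_rpow_le {a ε : ℝ} (ha : -1 < a) (hε : 0 ≤ ε) :
    ∫⁻ v in Ioo 0 1, (Iio ε).indicator (fun v => ENNReal.ofReal (v ^ a)) v
      ≤ ENNReal.ofReal (ε ^ (a + 1) / |a + 1|) := by
  rw [abs_of_pos (by linarith), ← lintegral_Ioo_rpow ha hε,
    setLIntegral_indicator measurableSet_Iio]
  exact lintegral_mono_set fun v hv => ⟨hv.2.1, hv.1⟩

lemma lintegral_indicator_Ici_rpow_le {a ε : ℝ} (ha : a < -1) (hε : 0 < ε) :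
    ∫⁻ v in Ioo 0 1, (Ici ε).indicator (fun v => ENNReal.ofReal (v ^ a)) v
      ≤ ENNReal.ofReal (ε ^ (a + 1) / |a + 1|) := by
  rw [abs_of_neg (by linarith), div_neg, ← neg_div, ← lintegral_Ioi_rpow ha hε,
    setLIntegral_indicator measurableSet_Ici, restrict_Ioi_eq_restrict_Ici]
  exact lintegral_mono_set inter_subset_left

end PowerIntegrals

section PolarCoordinates

variable {E : Type*} [NormedAddCommGroup E] [NormedSpace ℝ E] [FiniteDimensional ℝ E]
  [MeasurableSpace E] [BorelSpace E] (μ : Measure E) [μ.IsAddHaarMeasure]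

lemma lintegral_norm_addHaar [Nontrivial E] {f : ℝ → ℝ≥0∞} (hf : Measurable f) :
    ∫⁻ y, f ‖y‖ ∂μ = finrank ℝ E * μ (ball 0 1) *
      ∫⁻ r in Ioi 0, ENNReal.ofReal (r ^ (finrank ℝ E - 1)) * f r :=
  calc ∫⁻ y, f ‖y‖ ∂μ
      = ∫⁻ y : ({0}ᶜ : Set E), f ‖y.1‖ ∂μ.comap (↑) := by
        rw [lintegral_subtype_comap (measurableSet_singleton _).compl fun y => f ‖y‖,
          restrict_compl_singleton]
    _ = ∫⁻ q, f q.2 ∂μ.toSphere.prod (.volumeIoiPow (finrank ℝ E - 1)) := by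
        simpa using μ.measurePreserving_homeomorphUnitSphereProd.lintegral_comp_emb
          (Homeomorph.measurableEmbedding _) (f ∘ Subtype.val ∘ Prod.snd)
    _ = finrank ℝ E * μ (ball 0 1) *
          ∫⁻ r : Ioi (0 : ℝ), f r ∂.volumeIoiPow (finrank ℝ E - 1) := by
        rw [lintegral_prod _ (by fun_prop)]
        simp only [lintegral_const]
        rw [μ.toSphere_apply_univ, mul_comm]
    _ = _ := by
        rw [Measure.volumeIoiPow, lintegral_withDensity_eq_lintegral_mul _ (by fun_prop)
          (by fun_prop)]
        congr 1
        exact lintegral_subtype_comap measurableSet_Ioi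
          fun r => ENNReal.ofReal (r ^ (finrank ℝ E - 1)) * f r

lemma lintegral_ball_dist [Nontrivial E] {f : ℝ → ℝ≥0∞} (hf : Measurable f) (x : E) (R : ℝ) :
    ∫⁻ y in ball x R, f (dist y x) ∂μ = finrank ℝ E * μ (ball 0 1) *
      ∫⁻ r in Ioo 0 R, ENNReal.ofReal (r ^ (finrank ℝ E - 1)) * f r := by
  calc ∫⁻ y in ball x R, f (dist y x) ∂μ
      = ∫⁻ y, (Iio R).indicator f ‖y - x‖ ∂μ := by
        rw [← lintegral_indicator measurableSet_ball]
        simp only [← dist_eq_norm]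
        rfl
    _ = ∫⁻ y, (Iio R).indicator f ‖y‖ ∂μ :=
        lintegral_sub_right_eq_self (fun y => (Iio R).indicator f ‖y‖) x
    _ = _ := by
        rw [lintegral_norm_addHaar μ (hf.indicator measurableSet_Iio)]
        simp_rw [← indicator_mul_right (Iio R) fun r => ENNReal.ofReal (r ^ (finrank ℝ E - 1))]
        rw [setLIntegral_indicator measurableSet_Iio, inter_comm, Ioi_inter_Iio]

lemma image_one_sub_div_sq_Ioo {R : ℝ} (hR : 0 < R) :
    (fun r => 1 - (r / R) ^ 2) '' Ioo 0 R = Ioo 0 1 := by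
  ext v
  constructor
  · rintro ⟨r, ⟨hr0, hrR⟩, rfl⟩
    have hlt : (r / R) ^ 2 < 1 := pow_lt_one₀ (by positivity) ((div_lt_one hR).2 hrR) two_ne_zero
    exact ⟨by linarith, by linarith [show 0 < (r / R) ^ 2 by positivity]⟩
  · rintro ⟨hv0, hv1⟩
    have : 0 < √(1 - v) := Real.sqrt_pos.2 (by linarith)
    refine ⟨R * √(1 - v), ⟨by positivity, mul_lt_of_lt_one_right hR ?_⟩, ?_⟩
    · exact (Real.sqrt_lt' one_pos).2 (by linarith)
    · simp only [mul_div_cancel_left₀ _ hR.ne']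
      rw [Real.sq_sqrt (by linarith), sub_sub_cancel]

lemma lintegral_comp_one_sub_div_sq {R : ℝ} (hR : 0 < R) (φ : ℝ → ℝ≥0∞) :
    ∫⁻ r in Ioo 0 R, ENNReal.ofReal (2 * r / R ^ 2) * φ (1 - (r / R) ^ 2)
      = ∫⁻ v in Ioo 0 1, φ v := by
  have hderiv : ∀ r ∈ Ioo 0 R,
      HasDerivWithinAt (fun r => 1 - (r / R) ^ 2) (-(2 * r / R ^ 2)) (Ioo 0 R) r := by
    intro r _
    convert! ((((hasDerivAt_id r).div_const R).pow 2).const_sub 1).hasDerivWithinAt using 1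
    simp only [Nat.cast_ofNat, id_eq, Nat.add_one_sub_one, pow_one, one_div, neg_inj]
    ring
  have hanti : AntitoneOn (fun r => 1 - (r / R) ^ 2) (Ioo 0 R) := fun r hr r' _ hle => by
    have := hr.1
    dsimp only
    gcongr
  rw [← image_one_sub_div_sq_Ioo hR, lintegral_image_eq_lintegral_deriv_mul_of_antitoneOn
    measurableSet_Ioo hderiv hanti]
  simp only [neg_neg]

lemma lintegral_ball_one_sub_div_sq_le (hE : 2 ≤ finrank ℝ E) {φ : ℝ → ℝ≥0∞} (hφ : Measurable φ)
    (x : E) {R : ℝ} (hR : 0 < R) :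
    ∫⁻ y in ball x R, φ (1 - (dist y x / R) ^ 2) ∂μ
      ≤ finrank ℝ E * μ (ball 0 1) *
        (ENNReal.ofReal (R ^ finrank ℝ E / 2) * ∫⁻ v in Ioo 0 1, φ v) := by
  have : Nontrivial E := nontrivial_of_finrank_pos (R := ℝ) (by lia)
  rw [lintegral_ball_dist μ (f := fun r => φ (1 - (r / R) ^ 2)) (by fun_prop),
    ← lintegral_comp_one_sub_div_sq hR]
  gcongr _ * ?_
  rw [← lintegral_const_mul _ (by fun_prop)]
  refine setLIntegral_mono' measurableSet_Ioo fun r hr => ?_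
  rw [← mul_assoc, ← ENNReal.ofReal_mul (by positivity)]
  gcongr
  obtain ⟨k, hk⟩ := Nat.exists_eq_add_of_le' hE
  calc r ^ (finrank ℝ E - 1) = r ^ k * r := by rw [hk, ← pow_succ]; rfl
    _ ≤ R ^ k * r := by
        have := hr.1.le
        gcongr
        exact hr.2.le
    _ = R ^ finrank ℝ E / 2 * (2 * r / R ^ 2) := by rw [hk]; field_simp; ring

end PolarCoordinates

section BackwardCone

variable {E : Type*} [PseudoMetricSpace E]

/-- The open backward light cone `{(s, y) : 0 < s, |y - x| < t - s}` with vertex `(t, x)` over the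
time slab `s > 0`. -/
def backwardCone (t : ℝ) (x : E) : Set (ℝ × E) := {p | 0 < p.1 ∧ dist p.2 x < t - p.1}

/-- The weight `1 - |ξ|²` with `ξ = (y - x) / (t - s)` at the point `p = (s, y)`; it takes values in
`(0, 1]` on the backward cone with vertex `(t, x)` and degenerates at the lateral boundary. -/
noncomputable def coneWeight (t : ℝ) (x : E) (p : ℝ × E) : ℝ := 1 - (dist p.2 x / (t - p.1)) ^ 2

variable {t : ℝ} {x : E} {p : ℝ × E}

lemma sub_fst_pos_of_mem_backwardCone (hp : p ∈ backwardCone t x) : 0 < t - p.1 :=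
  dist_nonneg.trans_lt hp.2

lemma coneWeight_pos_of_mem_backwardCone (hp : p ∈ backwardCone t x) : 0 < coneWeight t x p := by
  have hτ := sub_fst_pos_of_mem_backwardCone hp
  exact sub_pos.2 (pow_lt_one₀ (by positivity) ((div_lt_one hτ).2 hp.2) two_ne_zero)

lemma sqrt_sq_sub_sq_eq_mul_sqrt_coneWeight (hp : p ∈ backwardCone t x) :
    √((t - p.1) ^ 2 - dist p.2 x ^ 2) = (t - p.1) * √(coneWeight t x p) := by
  have hτ := sub_fst_pos_of_mem_backwardCone hp
  have hsq : (t - p.1) ^ 2 - dist p.2 x ^ 2 = (t - p.1) ^ 2 * coneWeight t x p := by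
    rw [coneWeight]
    field_simp
  rw [hsq, Real.sqrt_mul (sq_nonneg _), Real.sqrt_sq hτ.le]

variable [MeasurableSpace E] [OpensMeasurableSpace E]

lemma measurable_dist_snd (x : E) : Measurable fun p : ℝ × E => dist p.2 x :=
  (continuous_id.dist continuous_const).measurable.comp measurable_snd

lemma measurableSet_backwardCone (t : ℝ) (x : E) : MeasurableSet (backwardCone t x) := by
  have htime : MeasurableSet {p : ℝ × E | 0 < p.1} := measurableSet_lt (by fun_prop) (by fun_prop)
  have hspace : MeasurableSet {p : ℝ × E | dist p.2 x < t - p.1} :=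
    measurableSet_lt (measurable_dist_snd x) (by fun_prop)
  exact htime.inter hspace

@[fun_prop]
lemma measurable_coneWeight (t : ℝ) (x : E) : Measurable (coneWeight t x) := by
  have := measurable_dist_snd x
  unfold coneWeight
  fun_prop

lemma lintegral_backwardCone (μ : Measure E) [SFinite μ] (t : ℝ) (x : E)
    {f : ℝ × E → ℝ≥0∞} (hf : Measurable f) :
    ∫⁻ p in backwardCone t x, f p ∂(volume.prod μ)
      = ∫⁻ s in Ioo 0 t, ∫⁻ y in ball x (t - s), f (s, y) ∂μ := by
  rw [← lintegral_indicator (measurableSet_backwardCone t x),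
    lintegral_prod _ (hf.indicator (measurableSet_backwardCone t x)).aemeasurable,
    ← lintegral_indicator measurableSet_Ioo]
  congr 1 with s
  by_cases hs : s ∈ Ioo 0 t
  · rw [indicator_of_mem hs, ← lintegral_indicator measurableSet_ball]
    congr 1 with y
    simp [indicator, backwardCone, hs.1]
  · have hempty : ∀ y, (s, y) ∉ backwardCone t x := fun y hy =>
      hs ⟨hy.1, sub_pos.1 (sub_fst_pos_of_mem_backwardCone hy)⟩
    simp [indicator_of_notMem hs, indicator_of_notMem (hempty _)]

end BackwardCone

section BackwardConeHaar

variable {E : Type*} [NormedAddCommGroup E] [NormedSpace ℝ E] [FiniteDimensional ℝ E]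
  [MeasurableSpace E] [BorelSpace E] (μ : Measure E) [μ.IsAddHaarMeasure]

lemma lintegral_Ioc_closedBall_eq_backwardCone (t : ℝ) (x : E) {f : ℝ → E → ℝ≥0∞}
    (hf : Measurable fun p : ℝ × E => f p.1 p.2) :
    ∫⁻ s in Ioc 0 t, ∫⁻ y in {y | dist y x ≤ t - s}, f s y ∂μ
      = ∫⁻ p in backwardCone t x, f p.1 p.2 ∂(volume.prod μ) := by
  rw [lintegral_backwardCone μ t x hf, restrict_Ioo_eq_restrict_Ioc.symm]
  refine setLIntegral_congr_fun measurableSet_Ioo fun s hs => setLIntegral_congr ?_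
  have hsphere : μ (sphere x (t - s)) = 0 := μ.addHaar_sphere_of_ne_zero x (sub_pos.2 hs.2).ne'
  change closedBall x (t - s) =ᵐ[μ] ball x (t - s)
  rw [← ball_union_sphere]
  exact union_ae_eq_left_of_ae_eq_empty (ae_eq_empty.2 hsphere)

lemma lintegral_backwardCone_rpow_mul_le (hE : 2 ≤ finrank ℝ E) {t α : ℝ}
    (hα : -1 < α + finrank ℝ E) {φ : ℝ → ℝ≥0∞} (hφ : Measurable φ) (ht : 0 ≤ t) (x : E) :
    ∫⁻ p in backwardCone t x, ENNReal.ofReal ((t - p.1) ^ α) * φ (coneWeight t x p)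
        ∂(volume.prod μ)
      ≤ finrank ℝ E * μ (ball 0 1) *
        (ENNReal.ofReal (t ^ (α + finrank ℝ E + 1) / (2 * (α + finrank ℝ E + 1)))
          * ∫⁻ v in Ioo 0 1, φ v) := by
  set K : ℝ≥0∞ := finrank ℝ E * μ (ball 0 1)
  set I : ℝ≥0∞ := ∫⁻ v in Ioo 0 1, φ v
  have hslice : ∀ s ∈ Ioo 0 t,
      ∫⁻ y in ball x (t - s), ENNReal.ofReal ((t - s) ^ α) * φ (coneWeight t x (s, y)) ∂μ
        ≤ K * I * ENNReal.ofReal 2⁻¹ * ENNReal.ofReal ((t - s) ^ (α + finrank ℝ E)) := by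
    intro s hs
    have hτ : 0 < t - s := sub_pos.2 hs.2
    rw [lintegral_const_mul _ (by fun_prop)]
    calc ENNReal.ofReal ((t - s) ^ α) * ∫⁻ y in ball x (t - s), φ (coneWeight t x (s, y)) ∂μ
        ≤ ENNReal.ofReal ((t - s) ^ α) *
            (K * (ENNReal.ofReal ((t - s) ^ finrank ℝ E / 2) * I)) := by
          gcongr
          exact lintegral_ball_one_sub_div_sq_le μ hE hφ x hτ
      _ = _ := by
          rw [Real.rpow_add hτ, Real.rpow_natCast, ENNReal.ofReal_mul (by positivity),
            div_eq_mul_inv, ENNReal.ofReal_mul (by positivity)]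
          ring
  rw [lintegral_backwardCone μ t x (by fun_prop)]
  calc _ ≤ ∫⁻ s in Ioo 0 t,
          K * I * ENNReal.ofReal 2⁻¹ * ENNReal.ofReal ((t - s) ^ (α + finrank ℝ E)) :=
        setLIntegral_mono' measurableSet_Ioo hslice
    _ = _ := by
        have hκ : 0 < α + finrank ℝ E + 1 := by linarith
        rw [lintegral_const_mul _ (by fun_prop), lintegral_Ioo_sub_rpow hα ht, mul_comm 2,
          ← div_div, div_eq_mul_inv _ 2, ENNReal.ofReal_mul (by positivity)]
        ring

end BackwardConeHaar

section HolderOnCone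

lemma div_le_mul_rpow_mul_rpow {τ v A F G θ b : ℝ} (hτ : 0 < τ) (hv : 0 < v) (hθ : θ < 1)
    (hG : 0 ≤ G) (hF : F ≤ A * G ^ θ * v ^ b) :
    F / (τ * (τ * √v)) ≤ A * ((G / (τ * √v)) ^ θ *
      (τ ^ (-(1 - θ)⁻¹ - 1) * v ^ (b * (1 - θ)⁻¹ - 1 / 2)) ^ (1 - θ)) := by
  have hσ : 1 - θ ≠ 0 := by linarith
  have hτpow : (τ ^ θ)⁻¹ * τ ^ ((-(1 - θ)⁻¹ - 1) * (1 - θ)) = (τ * τ)⁻¹ := by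
    rw [← Real.rpow_neg hτ.le, ← Real.rpow_add hτ, ← sq, ← Real.rpow_natCast, ← Real.rpow_neg hτ.le]
    congr 1
    field_simp
    push_cast
    ring
  have hvpow : (v ^ (1 / 2 * θ))⁻¹ * v ^ ((b * (1 - θ)⁻¹ - 1 / 2) * (1 - θ))
      = v ^ b * (v ^ (1 / 2 : ℝ))⁻¹ := by
    rw [← Real.rpow_neg hv.le, ← Real.rpow_neg hv.le, ← Real.rpow_add hv, ← Real.rpow_add hv]
    congr 1
    field_simp
    ring
  calc F / (τ * (τ * √v)) ≤ A * G ^ θ * v ^ b / (τ * (τ * √v)) := by gcongr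
    _ = A * G ^ θ * (v ^ b * (v ^ (1 / 2 : ℝ))⁻¹) * (τ * τ)⁻¹ := by
        rw [Real.sqrt_eq_rpow]
        field_simp
    _ = _ := by
        rw [← hτpow, ← hvpow, Real.div_rpow hG (by positivity), Real.mul_rpow hτ.le (by positivity),
          Real.sqrt_eq_rpow, ← Real.rpow_mul hv.le, Real.mul_rpow (by positivity) (by positivity),
          ← Real.rpow_mul hτ.le, ← Real.rpow_mul hv.le]
        field_simp

lemma ofReal_le_mul_rpow_mul_rpow {a A b c p q : ℝ} (hA : 0 ≤ A) (hb : 0 ≤ b) (hc : 0 ≤ c)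
    (hp : 0 ≤ p) (hq : 0 ≤ q) (h : a ≤ A * (b ^ p * c ^ q)) :
    ENNReal.ofReal a
      ≤ ENNReal.ofReal A * (ENNReal.ofReal b ^ p * ENNReal.ofReal c ^ q) := by
  rw [ENNReal.ofReal_rpow_of_nonneg hb hp, ENNReal.ofReal_rpow_of_nonneg hc hq,
    ← ENNReal.ofReal_mul (by positivity), ← ENNReal.ofReal_mul hA]
  exact ENNReal.ofReal_le_ofReal h

/-- The dependence on `v = 1 - |ξ|²` of the weight that Hölder's inequality with exponents `θ` and
`1 - θ` leaves behind when `F ≤ A G ^ θ v ^ b` on the part `v ∈ J` of the cone. -/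
noncomputable def holderProfile (θ b : ℝ) (J : Set ℝ) : ℝ → ℝ≥0∞ :=
  J.indicator fun v => ENNReal.ofReal (v ^ (b * (1 - θ)⁻¹ - 1 / 2))

lemma measurable_holderProfile (θ b : ℝ) {J : Set ℝ} (hJ : MeasurableSet J) :
    Measurable (holderProfile θ b J) :=
  Measurable.indicator (by fun_prop) hJ

lemma lintegral_holderProfile_Ici_le {θ b ε : ℝ} (hθ : θ < 1) (hb : b < -((1 - θ) / 2))
    (hε : 0 < ε) :
    ∫⁻ v in Ioo 0 1, holderProfile θ b (Ici ε) v
      ≤ ENNReal.ofReal (ε ^ (b * (1 - θ)⁻¹ + 1 / 2) / |b * (1 - θ)⁻¹ + 1 / 2|) := by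
  have hσ : 0 < 1 - θ := sub_pos.2 hθ
  have hexp : b * (1 - θ)⁻¹ < -(1 / 2) := by
    rw [← div_eq_mul_inv, div_lt_iff₀ hσ]
    linarith
  have hadd : b * (1 - θ)⁻¹ + 1 / 2 = b * (1 - θ)⁻¹ - 1 / 2 + 1 := by ring
  rw [hadd]
  exact lintegral_indicator_Ici_rpow_le (by linarith) hε

lemma lintegral_holderProfile_Iio_le {θ b ε : ℝ} (hθ : θ < 1) (hb : -((1 - θ) / 2) < b)
    (hε : 0 ≤ ε) :
    ∫⁻ v in Ioo 0 1, holderProfile θ b (Iio ε) v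
      ≤ ENNReal.ofReal (ε ^ (b * (1 - θ)⁻¹ + 1 / 2) / |b * (1 - θ)⁻¹ + 1 / 2|) := by
  have hσ : 0 < 1 - θ := sub_pos.2 hθ
  have hexp : -(1 / 2) < b * (1 - θ)⁻¹ := by
    rw [← div_eq_mul_inv, lt_div_iff₀ hσ]
    linarith
  have hadd : b * (1 - θ)⁻¹ + 1 / 2 = b * (1 - θ)⁻¹ - 1 / 2 + 1 := by ring
  rw [hadd]
  exact lintegral_indicator_Iio_rpow_le (by linarith) hε


lemma setLIntegral_div_le_of_le_rpow {E : Type*} [PseudoMetricSpace E] [MeasurableSpace E]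
    [OpensMeasurableSpace E] (μ : Measure E) {t : ℝ} {x : E} {A θ b : ℝ} (hA : 0 ≤ A) (hθ₀ : 0 ≤ θ)
    (hθ₁ : θ < 1) {F G : ℝ × E → ℝ} (hGm : Measurable G) (hG : ∀ p, 0 ≤ G p) {J : Set ℝ}
    (hJ : MeasurableSet J)
    (hFG : ∀ p ∈ backwardCone t x, coneWeight t x p ∈ J →
      F p ≤ A * G p ^ θ * coneWeight t x p ^ b) :
    ∫⁻ p in backwardCone t x ∩ coneWeight t x ⁻¹' J,
        ENNReal.ofReal (F p / ((t - p.1) * √((t - p.1) ^ 2 - dist p.2 x ^ 2))) ∂(volume.prod μ)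
      ≤ ENNReal.ofReal A *
        ((∫⁻ p in backwardCone t x,
            ENNReal.ofReal (G p / √((t - p.1) ^ 2 - dist p.2 x ^ 2)) ∂(volume.prod μ)) ^ θ *
          (∫⁻ p in backwardCone t x, ENNReal.ofReal ((t - p.1) ^ (-(1 - θ)⁻¹ - 1)) *
            holderProfile θ b J (coneWeight t x p) ∂(volume.prod μ)) ^ (1 - θ)) := by
  have hprofile := measurable_holderProfile θ b hJ
  have hdist := measurable_dist_snd x
  have hpointwise : ∀ p ∈ backwardCone t x ∩ coneWeight t x ⁻¹' J,
      ENNReal.ofReal (F p / ((t - p.1) * √((t - p.1) ^ 2 - dist p.2 x ^ 2)))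
        ≤ ENNReal.ofReal A * (ENNReal.ofReal (G p / √((t - p.1) ^ 2 - dist p.2 x ^ 2)) ^ θ *
          (ENNReal.ofReal ((t - p.1) ^ (-(1 - θ)⁻¹ - 1)) *
            holderProfile θ b J (coneWeight t x p)) ^ (1 - θ)) := by
    rintro p ⟨hp, hpJ⟩
    have hτ := sub_fst_pos_of_mem_backwardCone hp
    have hv := coneWeight_pos_of_mem_backwardCone hp
    rw [sqrt_sq_sub_sq_eq_mul_sqrt_coneWeight hp, holderProfile,
      indicator_of_mem (mem_preimage.1 hpJ), ← ENNReal.ofReal_mul (by positivity)]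
    exact ofReal_le_mul_rpow_mul_rpow hA (div_nonneg (hG p) (by positivity)) (by positivity) hθ₀
      (by linarith) (div_le_mul_rpow_mul_rpow hτ hv hθ₁ (hG p) (hFG p hp hpJ))
  refine (setLIntegral_mono' ((measurableSet_backwardCone t x).inter
    (measurable_coneWeight t x hJ)) hpointwise).trans ?_
  refine (lintegral_mono_set inter_subset_left).trans ?_
  rw [lintegral_const_mul _ (by fun_prop)]
  gcongr
  exact ENNReal.lintegral_mul_norm_pow_le (by fun_prop) (by fun_prop) hθ₀ (by linarith) (by ring)

end HolderOnCone

section ConeEstimate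

variable {E : Type*} [NormedAddCommGroup E] [NormedSpace ℝ E] [MeasurableSpace E] (μ : Measure E)

/-- The constant in the cone estimate for one part of the cone, where `F ≤ A G ^ θ v ^ b` with
`v = 1 - |ξ|²`. Integrating the Hölder weight over time produces the exponent `dim E - (1 - θ)⁻¹` of
`t`, integrating it over `v` the exponent `b (1 - θ)⁻¹ + 1 / 2` of `ε`. -/
noncomputable def coneConstant (θ b : ℝ) : ℝ≥0∞ :=
  (finrank ℝ E * μ (ball 0 1) * ENNReal.ofReal
    (2 * (finrank ℝ E - (1 - θ)⁻¹) * |b * (1 - θ)⁻¹ + 1 / 2|)⁻¹) ^ (1 - θ)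

variable [FiniteDimensional ℝ E] [μ.IsAddHaarMeasure]

lemma coneConstant_ne_top {θ : ℝ} (hθ : θ < 1) (b : ℝ) : coneConstant μ θ b ≠ ∞ :=
  ENNReal.rpow_ne_top_of_nonneg (by linarith) <| ENNReal.mul_ne_top
    (ENNReal.mul_ne_top (ENNReal.natCast_ne_top _) measure_ball_lt_top.ne) ENNReal.ofReal_ne_top

lemma two_le_of_mul_lt_sub_one {n : ℕ} {θ : ℝ} (hθ : 0 ≤ θ) (hn : n * θ < n - 1) : 2 ≤ n := by
  have : (1 : ℝ) < n := by linarith [show 0 ≤ n * θ by positivity]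
  exact_mod_cast this

lemma lt_one_of_mul_lt_sub_one {n : ℕ} {θ : ℝ} (hn : n * θ < n - 1) : θ < 1 := by
  by_contra! hθ
  nlinarith [n.cast_nonneg (α := ℝ)]

lemma inv_one_sub_lt_of_mul_lt_sub_one {n : ℕ} {θ : ℝ} (hn : n * θ < n - 1) :
    (1 - θ)⁻¹ < n := by
  rw [inv_lt_iff_one_lt_mul₀ (sub_pos.2 (lt_one_of_mul_lt_sub_one hn))]
  linarith

variable [BorelSpace E]

lemma lintegral_holderWeight_rpow_le {t θ b ε : ℝ} (ht : 0 < t) (hε : 0 < ε) (hθ : 0 ≤ θ)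
    (hn : finrank ℝ E * θ < finrank ℝ E - 1) (x : E) {J : Set ℝ} (hJ : MeasurableSet J)
    (hprofile : ∫⁻ v in Ioo 0 1, holderProfile θ b J v
      ≤ ENNReal.ofReal (ε ^ (b * (1 - θ)⁻¹ + 1 / 2) / |b * (1 - θ)⁻¹ + 1 / 2|)) :
    (∫⁻ p in backwardCone t x, ENNReal.ofReal ((t - p.1) ^ (-(1 - θ)⁻¹ - 1)) *
        holderProfile θ b J (coneWeight t x p) ∂(volume.prod μ)) ^ (1 - θ)
      ≤ coneConstant μ θ b * ENNReal.ofReal (t ^ (finrank ℝ E - 1 - finrank ℝ E * θ)) *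
        ENNReal.ofReal ε ^ ((1 - θ) / 2 + b) := by
  have hσ : 0 < 1 - θ := sub_pos.2 (lt_one_of_mul_lt_sub_one hn)
  have hκ := sub_pos.2 (inv_one_sub_lt_of_mul_lt_sub_one hn)
  set n : ℝ := (finrank ℝ E : ℝ)
  set q : ℝ := b * (1 - θ)⁻¹ + 1 / 2 with hq
  have hkernel := lintegral_backwardCone_rpow_mul_le μ (two_le_of_mul_lt_sub_one hθ hn)
    (α := -(1 - θ)⁻¹ - 1) (by linarith) (measurable_holderProfile θ b hJ) ht.le x
  have htime : -(1 - θ)⁻¹ - 1 + n + 1 = n - (1 - θ)⁻¹ := by ring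
  have hκσ : (n - (1 - θ)⁻¹) * (1 - θ) = n - 1 - n * θ := by field_simp; ring
  have hqσ : q * (1 - θ) = (1 - θ) / 2 + b := by rw [hq]; field_simp; ring
  have hfactor : ENNReal.ofReal (t ^ (n - (1 - θ)⁻¹) / (2 * (n - (1 - θ)⁻¹))) *
      ENNReal.ofReal (ε ^ q / |q|)
      = ENNReal.ofReal (2 * (n - (1 - θ)⁻¹) * |q|)⁻¹ * ENNReal.ofReal (t ^ (n - (1 - θ)⁻¹))
        * ENNReal.ofReal (ε ^ q) := by
    rw [← ENNReal.ofReal_mul (by positivity), ← ENNReal.ofReal_mul (by positivity),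
      ← ENNReal.ofReal_mul (by positivity)]
    congr 1
    rw [mul_inv]
    ring
  calc _ ≤ (finrank ℝ E * μ (ball 0 1) *
        (ENNReal.ofReal (t ^ (n - (1 - θ)⁻¹) / (2 * (n - (1 - θ)⁻¹))) *
          ENNReal.ofReal (ε ^ q / |q|))) ^ (1 - θ) := by
        rw [htime] at hkernel
        grw [hkernel, hprofile]
    _ = _ := by
        rw [hfactor, ← mul_assoc, ← mul_assoc, ENNReal.mul_rpow_of_nonneg _ _ hσ.le,
          ENNReal.mul_rpow_of_nonneg _ _ hσ.le, ENNReal.ofReal_rpow_of_pos (by positivity),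
          ENNReal.ofReal_rpow_of_pos (by positivity), ← Real.rpow_mul ht.le,
          ← Real.rpow_mul hε.le, hκσ, hqσ, ENNReal.ofReal_rpow_of_pos hε]
        rfl

lemma setLIntegral_div_le_coneConstant_mul {t : ℝ} {x : E} {A θ b ε : ℝ} (ht : 0 < t) (hA : 0 ≤ A)
    (hε : 0 < ε) (hθ : 0 ≤ θ) (hn : finrank ℝ E * θ < finrank ℝ E - 1) {F G : ℝ × E → ℝ}
    (hGm : Measurable G) (hG : ∀ p, 0 ≤ G p) {J : Set ℝ} (hJ : MeasurableSet J)
    (hFG : ∀ p ∈ backwardCone t x, coneWeight t x p ∈ J →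
      F p ≤ A * G p ^ θ * coneWeight t x p ^ b)
    (hprofile : ∫⁻ v in Ioo 0 1, holderProfile θ b J v
      ≤ ENNReal.ofReal (ε ^ (b * (1 - θ)⁻¹ + 1 / 2) / |b * (1 - θ)⁻¹ + 1 / 2|)) :
    ∫⁻ p in backwardCone t x ∩ coneWeight t x ⁻¹' J,
        ENNReal.ofReal (F p / ((t - p.1) * √((t - p.1) ^ 2 - dist p.2 x ^ 2))) ∂(volume.prod μ)
      ≤ coneConstant μ θ b * ENNReal.ofReal (A * t ^ (finrank ℝ E - 1 - finrank ℝ E * θ)) *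
        (ENNReal.ofReal ε ^ ((1 - θ) / 2 + b) *
          (∫⁻ p in backwardCone t x,
            ENNReal.ofReal (G p / √((t - p.1) ^ 2 - dist p.2 x ^ 2)) ∂(volume.prod μ)) ^ θ) := by
  refine (setLIntegral_div_le_of_le_rpow μ hA hθ (lt_one_of_mul_lt_sub_one hn) hGm hG hJ
    hFG).trans ?_
  grw [lintegral_holderWeight_rpow_le μ ht hε hθ hn x hJ hprofile]
  rw [ENNReal.ofReal_mul hA]
  exact le_of_eq (by ring)

lemma lintegral_backwardCone_div_le {t : ℝ} {x : E} {A θ β ε : ℝ} (ht : 0 < t) (hA : 0 ≤ A)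
    (hε : 0 < ε) (hθ : 0 ≤ θ) (hn : finrank ℝ E * θ < finrank ℝ E - 1) (hβ : (1 - θ) / 2 < β)
    {F G H : ℝ × E → ℝ} (hGm : Measurable G) (hHm : Measurable H) (hG : ∀ p, 0 ≤ G p)
    (hH : ∀ p, 0 ≤ H p)
    (hFG : ∀ p ∈ backwardCone t x, F p ≤ A * G p ^ θ * coneWeight t x p ^ (-β))
    (hFH : ∀ p ∈ backwardCone t x, F p ≤ A * H p ^ θ) :
    ∫⁻ p in backwardCone t x,
        ENNReal.ofReal (F p / ((t - p.1) * √((t - p.1) ^ 2 - dist p.2 x ^ 2))) ∂(volume.prod μ)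
      ≤ (coneConstant μ θ (-β) + coneConstant μ θ 0) *
        ENNReal.ofReal (A * t ^ (finrank ℝ E - 1 - finrank ℝ E * θ)) *
        (ENNReal.ofReal ε ^ ((1 - θ) / 2 - β) *
          (∫⁻ p in backwardCone t x,
            ENNReal.ofReal (G p / √((t - p.1) ^ 2 - dist p.2 x ^ 2)) ∂(volume.prod μ)) ^ θ
        + ENNReal.ofReal ε ^ ((1 - θ) / 2) *
          (∫⁻ p in backwardCone t x,
            ENNReal.ofReal (H p / √((t - p.1) ^ 2 - dist p.2 x ^ 2)) ∂(volume.prod μ)) ^ θ) := by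
  have hθ₁ := lt_one_of_mul_lt_sub_one hn
  have hinner := setLIntegral_div_le_coneConstant_mul μ ht hA hε hθ hn hGm hG measurableSet_Ici
    (fun p hp _ => hFG p hp) (lintegral_holderProfile_Ici_le hθ₁ (by linarith) hε)
  have houter := setLIntegral_div_le_coneConstant_mul μ (b := 0) ht hA hε hθ hn hHm hH
    measurableSet_Iio (fun p hp _ => by simpa using hFH p hp)
    (lintegral_holderProfile_Iio_le hθ₁ (by linarith) hε.le)
  rw [← sub_eq_add_neg] at hinner
  rw [add_zero] at houter
  rw [← lintegral_inter_add_sdiff _ _ (measurable_coneWeight t x measurableSet_Ici), sdiff_eq,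
    ← preimage_compl, compl_Ici]
  grw [hinner, houter]
  rw [mul_add]
  gcongr
  · exact le_self_add
  · exact le_add_self

end ConeEstimate

theorem abstract_cone_estimate_general {E : Type*} [NormedAddCommGroup E] [NormedSpace ℝ E]
    [FiniteDimensional ℝ E] [MeasurableSpace E] [BorelSpace E] (μ : Measure E)
    [μ.IsAddHaarMeasure] {θ β : ℝ} (hθ : 0 ≤ θ) (hn : finrank ℝ E * θ < finrank ℝ E - 1)
    (hβ : (1 - θ) / 2 < β) :
    ∃ C : ℝ≥0, 0 < C ∧
      ∀ (t : ℝ), 0 < t → ∀ (x : E) (A : ℝ), 0 ≤ A →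
      ∀ (F G H : ℝ → E → ℝ),
        Measurable (Function.uncurry F) →
        Measurable (Function.uncurry G) →
        Measurable (Function.uncurry H) →
        (∀ s y, 0 ≤ G s y) → (∀ s y, 0 ≤ H s y) →
        (∀ s y, 0 < s → s < t → dist y x < t - s →
          F s y ≤ A * G s y ^ θ * (1 - (dist y x / (t - s)) ^ 2) ^ (-β)) →
        (∀ s y, 0 < s → s < t → dist y x < t - s → F s y ≤ A * H s y ^ θ) →
        ∀ ε : ℝ, 0 < ε →
          (∫⁻ s in Ioc (0 : ℝ) t, ∫⁻ y in {y | dist y x ≤ t - s},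
              ENNReal.ofReal (F s y / ((t - s) * √((t - s) ^ 2 - dist y x ^ 2))) ∂μ)
            ≤ C * ENNReal.ofReal (A * t ^ (finrank ℝ E - 1 - finrank ℝ E * θ)) *
              (ENNReal.ofReal ε ^ ((1 - θ) / 2 - β) *
                (∫⁻ s in Ioc (0 : ℝ) t, ∫⁻ y in {y | dist y x ≤ t - s},
                  ENNReal.ofReal (G s y / √((t - s) ^ 2 - dist y x ^ 2)) ∂μ) ^ θ
              + ENNReal.ofReal ε ^ ((1 - θ) / 2) *
                (∫⁻ s in Ioc (0 : ℝ) t, ∫⁻ y in {y | dist y x ≤ t - s},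
                  ENNReal.ofReal (H s y / √((t - s) ^ 2 - dist y x ^ 2)) ∂μ) ^ θ) := by
  have hθ₁ := lt_one_of_mul_lt_sub_one hn
  have hfinite : coneConstant μ θ (-β) + coneConstant μ θ 0 ≠ ∞ :=
    ENNReal.add_ne_top.2 ⟨coneConstant_ne_top μ hθ₁ (-β), coneConstant_ne_top μ hθ₁ 0⟩
  refine ⟨(coneConstant μ θ (-β) + coneConstant μ θ 0).toNNReal + 1, by positivity, ?_⟩
  intro t ht x A hA F G H hFm hGm hHm hG₀ hH₀ hFG hFH ε hε
  have hF : Measurable fun p : ℝ × E => F p.1 p.2 := hFm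
  have hG : Measurable fun p : ℝ × E => G p.1 p.2 := hGm
  have hH : Measurable fun p : ℝ × E => H p.1 p.2 := hHm
  rw [lintegral_Ioc_closedBall_eq_backwardCone μ t x (by fun_prop),
    lintegral_Ioc_closedBall_eq_backwardCone μ t x (by fun_prop),
    lintegral_Ioc_closedBall_eq_backwardCone μ t x (by fun_prop)]
  grw [lintegral_backwardCone_div_le μ ht hA hε hθ hn hβ hG hH (fun p => hG₀ p.1 p.2)
    (fun p => hH₀ p.1 p.2)
    (fun p hp => hFG p.1 p.2 hp.1 (sub_pos.1 (sub_fst_pos_of_mem_backwardCone hp)) hp.2)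
    (fun p hp => hFH p.1 p.2 hp.1 (sub_pos.1 (sub_fst_pos_of_mem_backwardCone hp)) hp.2)]
  gcongr
  rw [ENNReal.coe_add, ENNReal.coe_toNNReal hfinite]
  exact le_self_add

lemma rpow_le_one_add {t a : ℝ} (ht : 0 ≤ t) (ha₀ : 0 ≤ a) (ha₁ : a ≤ 1) : t ^ a ≤ 1 + t := by
  calc t ^ a ≤ (1 + t) ^ a := by gcongr; linarith
    _ ≤ 1 + t := Real.rpow_le_self_of_one_le (by linarith) ha₁

/-- **Abstract cone estimate** (the content of Propositions 5.3/5.4 and Remarks 5.1/5.2).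
There is an absolute constant `C` such that: if `F, G, H ≥ 0` satisfy, on the region
`{|y−x| ≤ t−s}` with `ξ = (y−x)/(t−s)`, the pointwise bounds
`F ≤ A G^{2/5} (1−|ξ|²)^{−2/5}` and `F ≤ A H^{2/5}`, then for every `ε ∈ (0,1]`,
`∫₀ᵗ∫_{|y−x|≤t−s} F/((t−s)√((t−s)²−|y−x|²)) ≤ C A (1+t) [ε^{−1/10} (∫₀ᵗ∫ G/√(...))^{2/5}
  + ε^{3/10} (∫₀ᵗ∫ H/√(...))^{2/5}]`. -/
theorem abstract_cone_estimate :
    ∃ C : ℝ≥0, 0 < C ∧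
      ∀ (t : ℝ), 0 < t → ∀ (x : EuclideanSpace ℝ (Fin 2)) (A : ℝ), 0 < A →
      ∀ (F G H : ℝ → EuclideanSpace ℝ (Fin 2) → ℝ),
        Measurable (Function.uncurry F) →
        Measurable (Function.uncurry G) →
        Measurable (Function.uncurry H) →
        (∀ s y, 0 ≤ F s y) → (∀ s y, 0 ≤ G s y) → (∀ s y, 0 ≤ H s y) →
        (∀ s y, 0 ≤ s → s < t → dist y x < t - s →
          F s y ≤ A * G s y ^ ((2 : ℝ) / 5)
            * (1 - (dist y x / (t - s)) ^ 2) ^ (-(2 / 5) : ℝ)) →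
        (∀ s y, 0 ≤ s → s < t → dist y x ≤ t - s →
          F s y ≤ A * H s y ^ ((2 : ℝ) / 5)) →
        ∀ ε : ℝ, 0 < ε → ε ≤ 1 →
          (∫⁻ s in Ioc (0 : ℝ) t, ∫⁻ y in {y | dist y x ≤ t - s},
              ENNReal.ofReal (F s y / ((t - s) * Real.sqrt ((t - s) ^ 2 - dist y x ^ 2))))
            ≤ C * ENNReal.ofReal (A * (1 + t)) *
              (ENNReal.ofReal ε ^ (-(1 / 10) : ℝ) *
                (∫⁻ s in Ioc (0 : ℝ) t, ∫⁻ y in {y | dist y x ≤ t - s},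
                  ENNReal.ofReal (G s y / Real.sqrt ((t - s) ^ 2 - dist y x ^ 2)))
                    ^ ((2 : ℝ) / 5)
              + ENNReal.ofReal ε ^ ((3 : ℝ) / 10) *
                (∫⁻ s in Ioc (0 : ℝ) t, ∫⁻ y in {y | dist y x ≤ t - s},
                  ENNReal.ofReal (H s y / Real.sqrt ((t - s) ^ 2 - dist y x ^ 2)))
                    ^ ((2 : ℝ) / 5)) := by
  obtain ⟨C, hC, h⟩ := abstract_cone_estimate_general
    (volume : Measure (EuclideanSpace ℝ (Fin 2))) (θ := 2 / 5) (β := 2 / 5) (by norm_num)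
    (by rw [finrank_euclideanSpace_fin]; norm_num) (by norm_num)
  refine ⟨C, hC, fun t ht x A hA F G H hF hG hH _ hG₀ hH₀ hFG hFH ε hε _ => ?_⟩
  have hcone := h t ht x A hA.le F G H hF hG hH hG₀ hH₀ (fun s y hs => hFG s y hs.le)
    (fun s y hs hst hy => hFH s y hs.le hst hy.le) ε hε
  have hexp_time : ((2 : ℕ) : ℝ) - 1 - (2 : ℕ) * (2 / 5) = 1 / 5 := by norm_num
  have hexp_G : ((1 : ℝ) - 2 / 5) / 2 - 2 / 5 = -(1 / 10) := by norm_num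
  have hexp_H : ((1 : ℝ) - 2 / 5) / 2 = 3 / 10 := by norm_num
  rw [finrank_euclideanSpace_fin, hexp_time, hexp_G, hexp_H] at hcone
  grw [hcone]
  gcongr
  exact rpow_le_one_add ht.le (by norm_num) (by norm_num)
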